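/- arXiv:2604.03615 — 2 statements merged into one kernel-verified Lean document; each statement's English description precedes it below -/
import Mathlib

section
/- Let Q = I_n + A be the signless Laplacian matrix of the directed cycle C⃗_n. Then the trace norm ‖Q‖_* = Σ_{j=0}^{n−1} 2·|cos(πj/n)| equals 2·cot(π/(2n)) when n ≥ 2 is even, and equals 2·csc(π/(2n)) when n ≥ 3 is odd. -/
open Matrix

/-- The multiset of singular values of a real square matrix `M`: the nonnegative
square roots of the eigenvalues of `M * Mᵀ` (the roots of its characteristic
polynomial, counted with multiplicity). -/
noncomputable def singularValues {m : Type*} [Fintype m] [DecidableEq m]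
    (M : Matrix m m ℝ) : Multiset ℝ :=
  ((M * Mᵀ).charpoly.roots).map Real.sqrt

/-- The trace norm of a real square matrix: the sum of its singular values. -/
noncomputable def traceNorm {m : Type*} [Fintype m] [DecidableEq m]
    (M : Matrix m m ℝ) : ℝ :=
  (singularValues M).sum

/-- Adjacency matrix of the directed cycle C⃗_n: entry (i,j) is 1 iff j ≡ i+1 (mod n). -/
def cycleAdj (n : ℕ) : Matrix (Fin n) (Fin n) ℝ :=
  fun i j => if (j : ℕ) = ((i : ℕ) + 1) % n then 1 else 0

/-- Adjacency matrix of the directed path P⃗_n: entry (i,j) is 1 iff j = i+1. -/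
def pathAdj (n : ℕ) : Matrix (Fin n) (Fin n) ℝ :=
  fun i j => if (j : ℕ) = (i : ℕ) + 1 then 1 else 0

/-- The outdegree matrix of a digraph with adjacency matrix `A`: the diagonal
matrix of row sums of `A`. -/
noncomputable def outDeg {m : Type*} [Fintype m] [DecidableEq m]
    (A : Matrix m m ℝ) : Matrix m m ℝ :=
  Matrix.diagonal (fun i => ∑ j, A i j)

/-- Adjacency matrix of the oriented star S⃗_n(x,y) on n = x+y+1 vertices:
vertex 0 is the center, vertices 1..x are the out-neighbours of the center and
vertices x+1..x+y are its in-neighbours. -/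
def starAdj (x y : ℕ) : Matrix (Fin (x + y + 1)) (Fin (x + y + 1)) ℝ :=
  fun i j =>
    if (i : ℕ) = 0 ∧ 1 ≤ (j : ℕ) ∧ (j : ℕ) ≤ x then 1
    else if (j : ℕ) = 0 ∧ x + 1 ≤ (i : ℕ) then 1 else 0

/-- Adjacency matrix of the out-star S⃗_n(n-1,0): vertex 0 is the center with
arcs to all other vertices, and there are no other arcs. -/
def outStarAdj (n : ℕ) : Matrix (Fin n) (Fin n) ℝ :=
  fun i j => if (i : ℕ) = 0 ∧ (j : ℕ) ≠ 0 then 1 else 0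

/-- Adjacency matrix of the disjoint union C⃗_{n-1} ∪ K₁: a directed (n-1)-cycle
on the first n-1 vertices together with an isolated last vertex. -/
def cycleK1Adj (n : ℕ) : Matrix (Fin n) (Fin n) ℝ :=
  fun i j =>
    if (i : ℕ) < n - 1 ∧ (j : ℕ) < n - 1 ∧ (j : ℕ) = ((i : ℕ) + 1) % (n - 1) then 1 else 0

/-!
The adjacency matrix `P` of the directed cycle is the permutation matrix of a rotation, so
`Pᵀ = P⁻¹`, and the transposed Vandermonde matrix of the `n`-th roots of unity `ω` diagonalises
both. Hence `(1 + P)(1 + P)ᵀ` has the eigenvalues `(1 + ω)(1 + ω⁻¹)`, which for `ω = exp (2ix)` is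
`(2 cos x)²`.

To sum `|cos (πj/n)|` over a period, let `j` run from `-m` to `n - m - 1` with `2m ≤ n ≤ 2m + 2`:
there all the cosines are nonnegative, and summing them along this arithmetic progression gives
`cos ((n - 1 - 2m) π/(2n)) / sin (π/(2n))`, where `n - 1 - 2m` is `-1` or `0` for `n = 2m` or
`n = 2m + 1`.
-/

section Diagonalization

open Polynomial

theorem semiconjBy_of_mul_eq_one {M : Type*} [Monoid M] {a x x' y y' : M}
    (h : SemiconjBy a x y) (hx : x * x' = 1) (hy : y' * y = 1) : SemiconjBy a x' y' := by
  calc a * x' = y' * y * a * x' := by rw [hy, one_mul]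
    _ = y' * (a * x) * x' := by rw [h.eq, mul_assoc y']
    _ = y' * a := by rw [mul_assoc, mul_assoc, hx, mul_one]

theorem charpoly_eq_prod_of_semiconjBy_diagonal {m R : Type*} [Fintype m] [DecidableEq m]
    [CommRing R] {F B : Matrix m m R} {d : m → R} (hF : IsUnit F)
    (h : SemiconjBy F (diagonal d) B) : B.charpoly = ∏ i, (X - C (d i)) := by
  obtain ⟨u, rfl⟩ := hF
  have hB : B = u * diagonal d * u⁻¹ := by rw [h.eq, u.mul_inv_cancel_right]
  rw [hB, coe_units_inv, charpoly_units_conj, charpoly_diagonal]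

theorem coe_finRotate_eq_mod {n : ℕ} (i : Fin n) : (finRotate n i : ℕ) = (i + 1) % n := by
  have := i.neZero
  rw [finRotate_apply, Fin.val_add, Fin.val_one', Nat.add_mod_mod]

theorem cycleAdj_eq_permMatrix (n : ℕ) : cycleAdj n = (finRotate n).permMatrix ℝ := by
  ext i j
  simp only [cycleAdj, PEquiv.toMatrix_apply, Equiv.toPEquiv_apply, Option.mem_some_iff,
    ← coe_finRotate_eq_mod, Fin.val_inj, eq_comm]

theorem semiconjBy_diagonal_permMatrix_finRotate {n : ℕ} {R : Type*} [CommRing R]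
    {v : Fin n → R} (hv : ∀ j, v j ^ n = 1) :
    SemiconjBy (vandermonde v)ᵀ (diagonal v) ((finRotate n).permMatrix R) := by
  rw [SemiconjBy, PEquiv.toMatrix_toPEquiv_mul]
  ext i j
  rw [mul_diagonal, submatrix_apply, transpose_apply, transpose_apply, vandermonde_apply,
    vandermonde_apply, coe_finRotate_eq_mod, ← pow_succ, id, ← pow_eq_pow_mod _ (hv j)]

theorem semiconjBy_diagonal_inv_transpose_permMatrix_finRotate {n : ℕ} {K : Type*} [Field K]
    {v : Fin n → K} (hv : ∀ j, v j ^ n = 1) :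
    SemiconjBy (vandermonde v)ᵀ (diagonal fun j ↦ (v j)⁻¹) ((finRotate n).permMatrix K)ᵀ := by
  refine semiconjBy_of_mul_eq_one (semiconjBy_diagonal_permMatrix_finRotate hv) ?_ ?_
  · have hv0 (j : Fin n) : v j ≠ 0 := ne_zero_pow j.pos.ne' (hv j ▸ one_ne_zero)
    simp only [diagonal_mul_diagonal, mul_inv_cancel₀ (hv0 _), diagonal_one]
  · rw [transpose_permMatrix, ← permMatrix_mul, mul_inv_cancel, permMatrix_one]

theorem charpoly_one_add_permMatrix_finRotate_mul_transpose {n : ℕ} {K : Type*} [Field K]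
    {ζ : K} (hζ : IsPrimitiveRoot ζ n) :
    ((1 + (finRotate n).permMatrix K) * (1 + (finRotate n).permMatrix K)ᵀ).charpoly =
      ∏ j : Fin n, (X - C ((1 + ζ ^ (j : ℕ)) * (1 + (ζ ^ (j : ℕ))⁻¹))) := by
  set v : Fin n → K := fun j ↦ ζ ^ (j : ℕ)
  have hv (j : Fin n) : v j ^ n = 1 := by rw [pow_right_comm, hζ.pow_eq_one, one_pow]
  have hv_inj : Function.Injective v := fun i j hij ↦ Fin.ext (hζ.pow_inj i.isLt j.isLt hij)
  have hF : IsUnit (vandermonde v)ᵀ := by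
    rwa [isUnit_iff_isUnit_det, det_transpose, isUnit_iff_ne_zero, det_vandermonde_ne_zero_iff]
  have hdiag : diagonal (fun j ↦ (1 + v j) * (1 + (v j)⁻¹)) =
      (1 + diagonal v) * (1 + diagonal fun j ↦ (v j)⁻¹) := by
    simp only [← diagonal_one, diagonal_add, diagonal_mul_diagonal]
  refine charpoly_eq_prod_of_semiconjBy_diagonal hF ?_
  rw [hdiag, transpose_add, transpose_one]
  exact SemiconjBy.mul_right
    ((SemiconjBy.one_right _).add_right (semiconjBy_diagonal_permMatrix_finRotate hv))
    ((SemiconjBy.one_right _).add_right (semiconjBy_diagonal_inv_transpose_permMatrix_finRotate hv))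

theorem one_add_exp_mul_one_add_exp_inv (z : ℂ) :
    (1 + Complex.exp (2 * z * Complex.I)) * (1 + (Complex.exp (2 * z * Complex.I))⁻¹) =
      (2 * Complex.cos z) ^ 2 := by
  have hexp : Complex.exp (2 * z * Complex.I) = Complex.exp (z * Complex.I) ^ 2 := by
    rw [← Complex.exp_nat_mul, Nat.cast_two, mul_assoc]
  have hne : Complex.exp (z * Complex.I) ≠ 0 := Complex.exp_ne_zero _
  rw [Complex.two_cos, neg_mul, Complex.exp_neg, hexp]
  field_simp
  ring

theorem charpoly_one_add_cycleAdj_mul_transpose {n : ℕ} (hn : n ≠ 0) :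
    ((1 + cycleAdj n) * (1 + cycleAdj n)ᵀ).charpoly =
      ∏ j : Fin n, (X - C ((2 * Real.cos (Real.pi * (j : ℕ) / n)) ^ 2)) := by
  apply Polynomial.map_injective (algebraMap ℝ ℂ) (algebraMap ℝ ℂ).injective
  have hmap : (1 + cycleAdj n).map (algebraMap ℝ ℂ) = 1 + (finRotate n).permMatrix ℂ := by
    rw [cycleAdj_eq_permMatrix, Matrix.map_add _ (map_add _),
      Matrix.map_one _ (map_zero _) (map_one _), PEquiv.map_toMatrix]
  rw [← charpoly_map, Matrix.map_mul, transpose_map, hmap,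
    charpoly_one_add_permMatrix_finRotate_mul_transpose (Complex.isPrimitiveRoot_exp n hn),
    Polynomial.map_prod]
  refine Finset.prod_congr rfl fun j _ ↦ ?_
  have hpow : Complex.exp (2 * Real.pi * Complex.I / n) ^ (j : ℕ) =
      Complex.exp (2 * (Real.pi * (j : ℕ) / n : ℝ) * Complex.I) := by
    rw [← Complex.exp_nat_mul]
    push_cast
    ring_nf
  rw [hpow, one_add_exp_mul_one_add_exp_inv, Polynomial.map_sub, map_X, map_C,
    Complex.coe_algebraMap]
  push_cast
  rfl

theorem traceNorm_eq_sum_abs_of_charpoly_eq {m ι : Type*} [Fintype m] [DecidableEq m] [Fintype ι]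
    {M : Matrix m m ℝ} {s : ι → ℝ} (h : (M * Mᵀ).charpoly = ∏ i, (X - C (s i ^ 2))) :
    traceNorm M = ∑ i, |s i| := by
  have hroots : (M * Mᵀ).charpoly.roots = Finset.univ.val.map fun i ↦ s i ^ 2 := by
    rw [h, roots_prod _ _ (monic_prod_X_sub_C _ _).ne_zero]
    simp only [roots_X_sub_C, Multiset.bind_singleton]
  simp only [traceNorm, singularValues, hroots, Multiset.map_map, Function.comp_apply,
    Real.sqrt_sq_eq_abs, Finset.sum_map_val]

theorem traceNorm_one_add_cycleAdj {n : ℕ} (hn : n ≠ 0) :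
    traceNorm (1 + cycleAdj n) = ∑ j ∈ Finset.range n, 2 * |Real.cos (Real.pi * j / n)| := by
  rw [traceNorm_eq_sum_abs_of_charpoly_eq (charpoly_one_add_cycleAdj_mul_transpose hn),
    Fin.sum_univ_eq_sum_range (fun j ↦ |2 * Real.cos (Real.pi * j / n)|)]
  simp only [abs_mul, abs_two]

end Diagonalization

section CosineSum

open Finset Real

theorem sum_range_add_eq_of_periodic {M : Type*} [AddCommMonoid M] {f : ℕ → M} {n : ℕ}
    (hf : Function.Periodic f n) (a : ℕ) : ∑ i ∈ range n, f (a + i) = ∑ i ∈ range n, f i := by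
  calc ∑ i ∈ range n, f (a + i) = ∑ i ∈ Ico a (a + n), f (i % n) := by
        simp only [hf.map_mod_nat, sum_Ico_eq_sum_range, Nat.add_sub_cancel_left]
    _ = (((Multiset.Ico a (a + n)).map (· % n)).map f).sum := by
        rw [Multiset.map_map]; rfl
    _ = ∑ i ∈ range n, f i := by
        rw [Nat.multiset_Ico_map_mod]; rfl

theorem sum_range_abs_cos_eq_sum_range_cos {n m : ℕ} (hn : n ≠ 0) (hm : 2 * m ≤ n)
    (hm' : n ≤ 2 * m + 2) :
    ∑ j ∈ range n, |cos (π * j / n)| = ∑ j ∈ range n, cos (π / n * j + -(π / n * m)) := by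
  have hperiodic : Function.Periodic (fun j : ℕ ↦ |cos (π * j / n)|) n := fun j ↦ by
    have harg : π * (j + n : ℕ) / n = π * j / n + π := by push_cast; field_simp
    simp only [harg, cos_add_pi, abs_neg]
  rw [← sum_range_add_eq_of_periodic hperiodic (n - m)]
  refine sum_congr rfl fun j hj ↦ ?_
  have hshift : π * (n - m + j : ℕ) / n = π / n * j + -(π / n * m) + π := by
    rw [Nat.cast_add, Nat.cast_sub (by lia)]
    field_simp
    ring
  have hquadrant : |π / n * j + -(π / n * m)| ≤ π / 2 := by
    have hj_le : (2 * j : ℝ) ≤ 2 * m + n := by exact_mod_cast (by grind : 2 * j ≤ 2 * m + n)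
    have hm_le : (2 * m : ℝ) ≤ n := by exact_mod_cast hm
    have hdist : |(j - m : ℝ)| ≤ n / 2 :=
      abs_le.mpr ⟨by linarith [j.cast_nonneg (α := ℝ)], by linarith⟩
    calc |π / n * j + -(π / n * m)| = π / n * |(j - m : ℝ)| := by
          rw [← sub_eq_add_neg, ← mul_sub, abs_mul, abs_of_nonneg (by positivity)]
      _ ≤ π / n * (n / 2) := by gcongr
      _ = π / 2 := by field_simp
  rw [hshift, cos_add_pi, abs_neg, abs_of_nonneg]
  exact cos_nonneg_of_mem_Icc (abs_le.mp hquadrant)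

theorem sin_pi_div_two_mul_natCast_pos {n : ℕ} (hn : n ≠ 0) : 0 < sin (π / (2 * n)) := by
  have hn_one : (1 : ℝ) ≤ n := by exact_mod_cast Nat.one_le_iff_ne_zero.mpr hn
  exact sin_pos_of_pos_of_lt_pi (by positivity) (div_lt_self pi_pos (by linarith))

theorem sum_range_abs_cos {n m : ℕ} (hn : n ≠ 0) (hm : 2 * m ≤ n) (hm' : n ≤ 2 * m + 2) :
    ∑ j ∈ range n, |cos (π * j / n)| =
      cos ((n - 1 - 2 * m) * (π / (2 * n))) / sin (π / (2 * n)) := by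
  rw [sum_range_abs_cos_eq_sum_range_cos hn hm hm',
    eq_div_iff (sin_pi_div_two_mul_natCast_pos hn).ne', mul_comm]
  have hhalf : π / (2 * n) = π / n / 2 := by rw [div_div, mul_comm]
  have hquarter : (n : ℝ) * (π / n) / 2 = π / 2 := by field_simp
  rw [hhalf, sin_mul_sum_cos, hquarter, sin_pi_div_two, one_mul]
  ring_nf

theorem sum_range_abs_cos_of_even {n : ℕ} (hn : n ≠ 0) (heven : Even n) :
    ∑ j ∈ range n, |cos (π * j / n)| = cot (π / (2 * n)) := by
  obtain ⟨m, hm⟩ := heven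
  have hcoeff : (n - 1 - 2 * m : ℝ) = -1 := by rw [hm]; push_cast; ring
  rw [sum_range_abs_cos hn (m := m) (by lia) (by lia), hcoeff, neg_one_mul, cos_neg,
    cot_eq_cos_div_sin]

theorem sum_range_abs_cos_of_odd {n : ℕ} (hodd : Odd n) :
    ∑ j ∈ range n, |cos (π * j / n)| = (sin (π / (2 * n)))⁻¹ := by
  obtain ⟨m, hm⟩ := hodd
  have hcoeff : (n - 1 - 2 * m : ℝ) = 0 := by rw [hm]; push_cast; ring
  rw [sum_range_abs_cos (m := m) (by lia) (by lia) (by lia), hcoeff, zero_mul, cos_zero, one_div]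

end CosineSum

theorem cycle_signless_laplacian_trace_norm (n : ℕ) :
    (2 ≤ n →
      traceNorm (1 + cycleAdj n) = ∑ j ∈ Finset.range n, 2 * |Real.cos (Real.pi * j / n)|) ∧
    (2 ≤ n → Even n → traceNorm (1 + cycleAdj n) = 2 * Real.cot (Real.pi / (2 * n))) ∧
    (3 ≤ n → Odd n → traceNorm (1 + cycleAdj n) = 2 * (Real.sin (Real.pi / (2 * n)))⁻¹) := by
  refine ⟨fun hn ↦ traceNorm_one_add_cycleAdj (by lia), fun hn heven ↦ ?_, fun hn hodd ↦ ?_⟩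
  · rw [traceNorm_one_add_cycleAdj (by lia), ← Finset.mul_sum,
      sum_range_abs_cos_of_even (by lia) heven]
  · rw [traceNorm_one_add_cycleAdj (by lia), ← Finset.mul_sum, sum_range_abs_cos_of_odd hodd]
end

section
/- Let n ≥ 2 and let Q = Δ⁺ + A be the signless Laplacian matrix of the directed path P⃗_n, where A_{i,i+1} = 1 for 1 ≤ i ≤ n−1, all other entries of A are 0, and Δ⁺ = diag(1,…,1,0). Then the singular values of Q are 2·sin(πj/(2n)) for j = 0, 1, …, n−1 (the same as those of L(P⃗_n)), and ‖Q‖_* = cot(π/(4n)) − 1. -/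
open Matrix

/-!
Conjugating the Laplacian `L` of the path by the signature matrix `diag(1, -1, 1, …)` flips the sign
of every arc, hence gives the signless Laplacian `Q`; so `Q` and `L` have the same singular values.
For `φ = π j / (2 n)` the vectors `w k = cos ((2 k + 1) φ)` and `v k = sin (2 (k + 1) φ)` satisfy
`L w = 2 sin φ • v` and `Lᵀ v = 2 sin φ • w`. The `n` numbers `2 sin φ`, `0 ≤ j < n`, are distinct
and nonnegative, so they are all the singular values. Their sum telescopes after multiplication by
`sin (π / (4 n))`.
-/

section Charpoly

variable {m R : Type*} [Fintype m] [DecidableEq m] [CommRing R] [IsDomain R]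

theorem isRoot_charpoly_of_mulVec_eq_smul {M : Matrix m m R} {μ : R} {w : m → R} (hw : w ≠ 0)
    (h : M *ᵥ w = μ • w) : M.charpoly.IsRoot μ := by
  rw [← charpoly_toLin', ← Module.End.hasEigenvalue_iff_isRoot_charpoly]
  exact Module.End.hasEigenvalue_of_hasEigenvector
    (Module.End.hasEigenvector_iff.mpr ⟨Module.End.mem_eigenspace_iff.mpr h, hw⟩)

theorem isRoot_charpoly_mul_transpose_of_singular_pair {M : Matrix m m R} {σ : R} {v w : m → R}
    (hw : w ≠ 0) (hMw : M *ᵥ w = σ • v) (hMv : Mᵀ *ᵥ v = σ • w) :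
    (M * Mᵀ).charpoly.IsRoot (σ ^ 2) := by
  rw [charpoly_mul_comm]
  refine isRoot_charpoly_of_mulVec_eq_smul hw ?_
  rw [← mulVec_mulVec, hMw, mulVec_smul, hMv, smul_smul, sq]

end Charpoly

section SingularValues

variable {m : Type*} [Fintype m] [DecidableEq m]

theorem singularValues_mul_mul_of_mem_orthogonalGroup {U V : Matrix m m ℝ}
    (hU : U ∈ orthogonalGroup m ℝ) (hV : V ∈ orthogonalGroup m ℝ) (M : Matrix m m ℝ) :
    singularValues (U * M * V) = singularValues M := by
  have hUU : Uᵀ * U = 1 := (mem_orthogonalGroup_iff' m ℝ).mp hU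
  have hVV : V * Vᵀ = 1 := (mem_orthogonalGroup_iff m ℝ).mp hV
  have gram_eq : U * M * V * (U * M * V)ᵀ = U * (M * Mᵀ * Uᵀ) :=
    calc U * M * V * (U * M * V)ᵀ = U * M * (V * Vᵀ) * Mᵀ * Uᵀ := by
          simp only [transpose_mul, mul_assoc]
      _ = U * (M * Mᵀ * Uᵀ) := by rw [hVV, mul_one]; simp only [mul_assoc]
  rw [singularValues, singularValues, gram_eq, charpoly_mul_comm, mul_assoc, hUU, mul_one]

theorem singularValues_eq_map_of_singular_pairs {ι : Type*} {M : Matrix m m ℝ} {s : Finset ι}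
    {σ : ι → ℝ} {v w : ι → m → ℝ} (hcard : Fintype.card m = s.card)
    (hσ : ∀ i ∈ s, 0 ≤ σ i) (hinj : Set.InjOn σ s) (hw : ∀ i ∈ s, w i ≠ 0)
    (hMw : ∀ i ∈ s, M *ᵥ w i = σ i • v i) (hMv : ∀ i ∈ s, Mᵀ *ᵥ v i = σ i • w i) :
    singularValues M = s.val.map σ := by
  have hinj_sq : Set.InjOn (fun i => σ i ^ 2) s := fun i hi j hj hij =>
    hinj hi hj ((sq_eq_sq₀ (hσ i hi) (hσ j hj)).mp hij)
  have roots_eq : (M * Mᵀ).charpoly.roots = (s.image fun i => σ i ^ 2).val := by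
    refine Polynomial.roots_eq_of_natDegree_le_card_of_ne_zero ?_ ?_ (charpoly_monic _).ne_zero
    · exact Finset.forall_mem_image.mpr fun i hi =>
        isRoot_charpoly_mul_transpose_of_singular_pair (hw i hi) (hMw i hi) (hMv i hi)
    · rw [charpoly_natDegree_eq_dim, Finset.card_image_of_injOn hinj_sq, hcard]
  rw [singularValues, roots_eq, Finset.image_val_of_injOn hinj_sq, Multiset.map_map]
  exact Multiset.map_congr rfl fun i hi => Real.sqrt_sq (hσ i hi)

end SingularValues

section Laplacian

variable {m : Type*} [Fintype m] [DecidableEq m]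

theorem outDeg_sub_mulVec_apply (A : Matrix m m ℝ) (w : m → ℝ) (i : m) :
    ((outDeg A - A) *ᵥ w) i = ∑ j, A i j * (w i - w j) := by
  rw [outDeg, sub_mulVec, Pi.sub_apply, mulVec_diagonal]
  simp only [mulVec, dotProduct, mul_sub, Finset.sum_sub_distrib, Finset.sum_mul]

theorem outDeg_sub_transpose_mulVec_apply (A : Matrix m m ℝ) (v : m → ℝ) (j : m) :
    ((outDeg A - A)ᵀ *ᵥ v) j = (∑ k, A j k) * v j - ∑ i, A i j * v i := by
  rw [outDeg, transpose_sub, diagonal_transpose, sub_mulVec, Pi.sub_apply, mulVec_diagonal]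
  rfl

theorem diagonal_mem_orthogonalGroup {R : Type*} [CommRing R] {s : m → R}
    (hs : ∀ i, s i * s i = 1) : diagonal s ∈ orthogonalGroup m R := by
  rw [mem_orthogonalGroup_iff, diagonal_transpose, diagonal_mul_diagonal, funext hs, diagonal_one]

theorem singularValues_outDeg_add_eq_of_bipartite {A : Matrix m m ℝ} {s : m → ℝ}
    (hs : ∀ i, s i * s i = 1) (hA : ∀ i j, A i j ≠ 0 → s i * s j = -1) :
    singularValues (outDeg A + A) = singularValues (outDeg A - A) := by
  have signature_conj : diagonal s * (outDeg A - A) * diagonal s = outDeg A + A := by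
    have conj_outDeg : diagonal s * outDeg A * diagonal s = outDeg A := by
      rw [outDeg, diagonal_mul_diagonal, diagonal_mul_diagonal]
      exact congrArg diagonal (funext fun i => by rw [mul_right_comm, hs, one_mul])
    have conj_adj : diagonal s * A * diagonal s = -A := by
      ext i j
      rw [mul_diagonal, diagonal_mul, mul_right_comm, neg_apply]
      by_cases hij : A i j = 0
      · rw [hij, mul_zero, neg_zero]
      · rw [hA i j hij, neg_one_mul]
    rw [mul_sub, sub_mul, conj_outDeg, conj_adj, sub_neg_eq_add]
  have hD := diagonal_mem_orthogonalGroup hs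
  rw [← signature_conj, singularValues_mul_mul_of_mem_orthogonalGroup hD hD]

end Laplacian

section Path

variable {n : ℕ}

theorem sum_pathAdj_row_mul (f : ℕ → ℝ) (i : Fin n) :
    ∑ j, pathAdj n i j * f j = if (i : ℕ) + 1 < n then f (i + 1) else 0 := by
  simp only [pathAdj, ite_mul, one_mul, zero_mul]
  rw [Fin.sum_univ_eq_sum_range (fun j => if j = (i : ℕ) + 1 then f j else 0)]
  simp only [Finset.sum_ite_eq', Finset.mem_range]

theorem sum_pathAdj_row (i : Fin n) : ∑ j, pathAdj n i j = if (i : ℕ) + 1 < n then 1 else 0 := by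
  simpa only [mul_one] using sum_pathAdj_row_mul (fun _ => 1) i

theorem sum_pathAdj_col_mul {f : ℕ → ℝ} (hf : f 0 = 0) (j : Fin n) :
    ∑ i, pathAdj n i j * f (i + 1) = f j := by
  obtain ⟨j, hj⟩ := j
  simp only [pathAdj, ite_mul, one_mul, zero_mul]
  rw [Fin.sum_univ_eq_sum_range (fun i => if j = i + 1 then f (i + 1) else 0)]
  cases j with
  | zero => simp [hf]
  | succ j => simp [Nat.lt_of_succ_lt hj]

theorem singularValues_path_add_eq_sub (n : ℕ) :
    singularValues (outDeg (pathAdj n) + pathAdj n) =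
      singularValues (outDeg (pathAdj n) - pathAdj n) := by
  refine singularValues_outDeg_add_eq_of_bipartite (s := fun i => (-1) ^ (i : ℕ))
    (fun i => by rw [← mul_pow, neg_one_mul, neg_neg, one_pow]) fun i j hij => ?_
  have hj : (j : ℕ) = i + 1 := by
    by_contra h
    exact hij (if_neg h)
  simp only [hj, pow_succ, mul_neg, ← mul_pow, neg_neg, mul_one, one_pow]

theorem path_laplacian_mulVec_cos {φ : ℝ} (hφ : Real.sin (2 * n * φ) = 0) :
    (outDeg (pathAdj n) - pathAdj n) *ᵥ (fun k : Fin n => Real.cos ((2 * k + 1) * φ)) =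
      (2 * Real.sin φ) • fun k : Fin n => Real.sin (2 * (k + 1) * φ) := by
  ext i
  have step : Real.cos ((2 * i + 1) * φ) - Real.cos ((2 * (i + 1 : ℕ) + 1) * φ) =
      2 * Real.sin φ * Real.sin (2 * (i + 1) * φ) := by
    rw [Real.two_mul_sin_mul_sin, ← Real.cos_neg (φ - _)]
    push_cast
    ring_nf
  rw [outDeg_sub_mulVec_apply, Pi.smul_apply, smul_eq_mul, ← step,
    sum_pathAdj_row_mul fun k => Real.cos ((2 * i + 1) * φ) - Real.cos ((2 * k + 1) * φ)]
  split_ifs with hi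
  · rfl
  · have hin : (i : ℝ) + 1 = n := by exact_mod_cast (by omega : (i : ℕ) + 1 = n)
    rw [step, hin, hφ, mul_zero]

theorem path_laplacian_transpose_mulVec_sin {φ : ℝ} (hφ : Real.sin (2 * n * φ) = 0) :
    (outDeg (pathAdj n) - pathAdj n)ᵀ *ᵥ (fun k : Fin n => Real.sin (2 * (k + 1) * φ)) =
      (2 * Real.sin φ) • fun k : Fin n => Real.cos ((2 * k + 1) * φ) := by
  ext j
  have inflow : ∑ i : Fin n, pathAdj n i j * Real.sin (2 * (i + 1) * φ) = Real.sin (2 * j * φ) := by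
    simpa using sum_pathAdj_col_mul (f := fun k => Real.sin (2 * k * φ)) (by simp) j
  have outflow : (∑ k, pathAdj n j k) * Real.sin (2 * (j + 1) * φ) =
      Real.sin (2 * (j + 1) * φ) := by
    rw [sum_pathAdj_row]
    split_ifs with hj
    · rw [one_mul]
    · have hjn : (j : ℝ) + 1 = n := by exact_mod_cast (by omega : (j : ℕ) + 1 = n)
      rw [hjn, hφ, mul_zero]
  rw [outDeg_sub_transpose_mulVec_apply, inflow, outflow, Real.sin_sub_sin, Pi.smul_apply,
    smul_eq_mul]
  ring_nf

theorem pi_mul_div_two_mul_mem_Ico {j : ℕ} (hj : j < n) :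
    Real.pi * j / (2 * n) ∈ Set.Ico 0 (Real.pi / 2) := by
  have hjn : (j : ℝ) < n := by exact_mod_cast hj
  have hn : (0 : ℝ) < n := j.cast_nonneg.trans_lt hjn
  refine ⟨by positivity, ?_⟩
  rw [div_lt_div_iff₀ (by positivity) two_pos]
  nlinarith [mul_lt_mul_of_pos_left hjn Real.pi_pos]

theorem injOn_two_mul_sin_pi_mul_div (n : ℕ) :
    Set.InjOn (fun j : ℕ => 2 * Real.sin (Real.pi * j / (2 * n))) (Finset.range n) := by
  intro j hj k hk hjk
  have angle_mem {i : ℕ} (hi : i ∈ Finset.range n) :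
      Real.pi * i / (2 * n) ∈ Set.Icc (-(Real.pi / 2)) (Real.pi / 2) :=
    Set.Icc_subset_Icc_left (by linarith [Real.pi_pos])
      (Set.Ico_subset_Icc_self (pi_mul_div_two_mul_mem_Ico (Finset.mem_range.mp hi)))
  have angle_eq : Real.pi * j / (2 * n) = Real.pi * k / (2 * n) :=
    Real.injOn_sin (angle_mem hj) (angle_mem hk) (mul_left_cancel₀ two_ne_zero hjk)
  have hn : (n : ℝ) ≠ 0 := by
    exact_mod_cast (Nat.zero_lt_of_lt (Finset.mem_range.mp hj)).ne'
  field_simp at angle_eq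
  exact_mod_cast angle_eq

theorem singularValues_path_laplacian (n : ℕ) :
    singularValues (outDeg (pathAdj n) - pathAdj n) =
      (Multiset.range n).map fun j : ℕ => 2 * Real.sin (Real.pi * j / (2 * n)) := by
  have angle_mem {j : ℕ} (hj : j ∈ Finset.range n) :=
    pi_mul_div_two_mul_mem_Ico (Finset.mem_range.mp hj)
  have sin_eq_zero {j : ℕ} (hj : j ∈ Finset.range n) :
      Real.sin (2 * n * (Real.pi * j / (2 * n))) = 0 := by
    have hn : (n : ℝ) ≠ 0 := by
      exact_mod_cast (Nat.zero_lt_of_lt (Finset.mem_range.mp hj)).ne'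
    rw [mul_div_cancel₀ _ (mul_ne_zero two_ne_zero hn), mul_comm, Real.sin_nat_mul_pi]
  refine singularValues_eq_map_of_singular_pairs (s := Finset.range n)
    (by rw [Fintype.card_fin, Finset.card_range]) (fun j hj => ?_)
    (injOn_two_mul_sin_pi_mul_div n) (fun j hj w_eq_zero => ?_)
    (fun j hj => path_laplacian_mulVec_cos (sin_eq_zero hj))
    (fun j hj => path_laplacian_transpose_mulVec_sin (sin_eq_zero hj))
  · have := Real.sin_nonneg_of_nonneg_of_le_pi (angle_mem hj).1
      (by linarith [(angle_mem hj).2, Real.pi_pos])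
    positivity
  · have hcos := Real.cos_pos_of_mem_Ioo
      ⟨by linarith [(angle_mem hj).1, Real.pi_pos], (angle_mem hj).2⟩
    have first_entry := congrFun w_eq_zero ⟨0, Nat.zero_lt_of_lt (Finset.mem_range.mp hj)⟩
    simp only [Nat.cast_zero, mul_zero, zero_add, one_mul, Pi.zero_apply] at first_entry
    exact hcos.ne' first_entry

end Path

theorem sum_two_mul_sin_mul_sin (a : ℝ) (n : ℕ) :
    (∑ j ∈ Finset.range n, 2 * Real.sin (2 * j * a)) * Real.sin a =
      Real.cos a - Real.cos ((2 * n - 1) * a) := by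
  have telescope := Finset.sum_range_sub' (fun j : ℕ => Real.cos ((2 * j - 1) * a)) n
  have first_term : Real.cos ((2 * (0 : ℕ) - 1) * a) = Real.cos a := by simp
  rw [first_term] at telescope
  rw [← telescope, Finset.sum_mul]
  refine Finset.sum_congr rfl fun j _ => ?_
  rw [Real.two_mul_sin_mul_sin]
  push_cast
  ring_nf

theorem sum_two_mul_sin_pi_mul_div {n : ℕ} (hn : n ≠ 0) :
    ∑ j ∈ Finset.range n, 2 * Real.sin (Real.pi * j / (2 * n)) =
      Real.cot (Real.pi / (4 * n)) - 1 := by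
  set a : ℝ := Real.pi / (4 * n) with ha
  have hn1 : (1 : ℝ) ≤ n := by exact_mod_cast Nat.one_le_iff_ne_zero.mpr hn
  have sin_pos : 0 < Real.sin a := by
    refine Real.sin_pos_of_pos_of_lt_pi (by positivity) (div_lt_self Real.pi_pos ?_)
    linarith
  have angle_eq (j : ℕ) : Real.pi * j / (2 * n) = 2 * j * a := by
    rw [ha]
    field_simp
    norm_num
  have last_angle : (2 * n - 1) * a = Real.pi / 2 - a := by
    rw [ha]
    field_simp
    ring
  have key := sum_two_mul_sin_mul_sin a n
  rw [last_angle, Real.cos_pi_div_two_sub] at key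
  simp only [angle_eq]
  rw [Real.cot_eq_cos_div_sin, div_sub_one sin_pos.ne', eq_div_iff sin_pos.ne', key]

theorem path_signless_laplacian_singular_values (n : ℕ) (hn : 2 ≤ n) :
    singularValues (outDeg (pathAdj n) + pathAdj n)
      = (Multiset.range n).map (fun j => 2 * Real.sin (Real.pi * j / (2 * n))) ∧
    singularValues (outDeg (pathAdj n) + pathAdj n)
      = singularValues (outDeg (pathAdj n) - pathAdj n) ∧
    traceNorm (outDeg (pathAdj n) + pathAdj n) = Real.cot (Real.pi / (4 * n)) - 1 := by
  -- In the goal `j` is real: `Multiset.range n` is coerced to `Multiset ℝ` by the multiset monad.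
  have coe_range : (Multiset.range n).map (fun j => 2 * Real.sin (Real.pi * j / (2 * n))) =
      (Multiset.range n).map fun j : ℕ => 2 * Real.sin (Real.pi * j / (2 * n)) := by
    simp
  have singularValues_eq :=
    (singularValues_path_add_eq_sub n).trans (singularValues_path_laplacian n)
  refine ⟨singularValues_eq.trans coe_range.symm, singularValues_path_add_eq_sub n, ?_⟩
  rw [traceNorm, singularValues_eq]
  exact sum_two_mul_sin_pi_mul_div (by omega)
end
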